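/- arXiv:math/0306232 — 2 statements merged into one kernel-verified Lean document; each statement's English description precedes it below -/
import Mathlib

section
/- Let p and q be coprime integers with 1 < q < p/2, and let r be an integer with 1 < r < q. Then w_{p,q,r,1} is not a primitive element of the free group F. -/
/-- The free group on two generators; `xx` and `yy` are the generators. -/
def xx : FreeGroup (Fin 2) := FreeGroup.of 0
def yy : FreeGroup (Fin 2) := FreeGroup.of 1

/-- The word `w_{p,q,r,m}` represented by the twisted torus knot
`T(p,q) + r T(m,n)` in the inside handlebody: writing `r = r̄ + α p`
with `0 ≤ r̄ < p`, it is `∏_{j=0}^{p-1} x^{m e_j} y` where `e_j = α+1`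
if `(j q mod p) < r̄` and `e_j = α` otherwise. -/
def w (p q r : ℕ) (m : ℤ) : FreeGroup (Fin 2) :=
  ((List.range p).map (fun j =>
    xx ^ (m * ((if j * q % p < r % p then r / p + 1 else r / p : ℕ) : ℤ)) * yy)).prod

/-- An element of the free group of rank two is primitive iff some automorphism
carries the generator `xx` to it. -/
def IsPrimitive (g : FreeGroup (Fin 2)) : Prop :=
  ∃ φ : FreeGroup (Fin 2) ≃* FreeGroup (Fin 2), φ xx = g

/-- The one-relator group `G_{a,b} = ⟨x, y | x^a y^b⟩`. -/
abbrev Gg (a b : ℤ) : Type := PresentedGroup ({xx ^ a * yy ^ b} : Set (FreeGroup (Fin 2)))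

/-- `g` is `(a,b)` Seifert-fibered if `F / ⟪g⟫ ≅ G_{a,b}`. -/
def IsSF (g : FreeGroup (Fin 2)) (a b : ℤ) : Prop :=
  Nonempty (PresentedGroup ({g} : Set (FreeGroup (Fin 2))) ≃* Gg a b)

section Primitive

/-- A homomorphism killing a primitive element of the free group of rank two has
commutative image. -/
theorem IsPrimitive.commute_map {G : Type*} [Group G] {g : FreeGroup (Fin 2)}
    (hg : IsPrimitive g) (f : FreeGroup (Fin 2) →* G) (hf : f g = 1)
    (a b : FreeGroup (Fin 2)) : Commute (f a) (f b) := by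
  obtain ⟨φ, rfl⟩ := hg
  have mem_zpowers : ∀ z, f (φ z) ∈ Subgroup.zpowers (f (φ yy)) := by
    intro z
    induction z using FreeGroup.induction_on with
    | C1 => simp
    | of i =>
      fin_cases i
      · change f (φ xx) ∈ _
        rw [hf]
        exact one_mem _
      · exact Subgroup.mem_zpowers _
    | inv_of i hi => simpa using hi
    | mul x y hx hy =>
      rw [map_mul, map_mul]
      exact mul_mem hx hy
  obtain ⟨m, hm⟩ := Subgroup.mem_zpowers_iff.1 (mem_zpowers (φ.symm a))
  obtain ⟨n, hn⟩ := Subgroup.mem_zpowers_iff.1 (mem_zpowers (φ.symm b))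
  rw [MulEquiv.apply_symm_apply] at hm hn
  rw [← hm, ← hn]
  exact Commute.zpow_zpow (Commute.refl _) m n

end Primitive

section AffineAction

open Polynomial

variable {R : Type*} [CommRing R]

/-- The affine permutation `v ↦ u * v + c` of a commutative ring. -/
def affinePerm (u : Rˣ) (c : R) : Equiv.Perm R where
  toFun v := u * v + c
  invFun v := (u⁻¹ : Rˣ) * (v - c)
  left_inv v := by simp
  right_inv v := by simp

@[simp]
theorem affinePerm_apply (u : Rˣ) (c v : R) : affinePerm u c v = u * v + c := rfl

/-- The affine action of the free group in which `xx` acts by `v ↦ u ^ p * v + 1`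
and `yy` by `v ↦ u ^ (-r) * v`. -/
def affineAction (u : Rˣ) (p r : ℕ) : FreeGroup (Fin 2) →* Equiv.Perm R :=
  FreeGroup.lift ![affinePerm (u ^ p) 1, affinePerm (u⁻¹ ^ r) 0]

@[simp]
theorem affineAction_xx (u : Rˣ) (p r : ℕ) :
    affineAction u p r xx = affinePerm (u ^ p) 1 := by
  simp [affineAction, xx]

@[simp]
theorem affineAction_yy (u : Rˣ) (p r : ℕ) :
    affineAction u p r yy = affinePerm (u⁻¹ ^ r) 0 := by
  simp [affineAction, yy]

/-- The number of `j < k` with `j * q % p < r`. -/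
def visits (p q r k : ℕ) : ℕ := Nat.count (fun j => j * q % p < r) k

theorem affineAction_prefix (u : Rˣ) (p q r k : ℕ) (v : R) :
    affineAction u p r ((List.range k).map (fun j =>
      xx ^ (if j * q % p < r then 1 else 0) * yy)).prod v =
      (u ^ (p * visits p q r k) * u⁻¹ ^ (r * k) : Rˣ) * v +
        ∑ j ∈ Finset.range k with j * q % p < r,
          ((u ^ (p * visits p q r j) * u⁻¹ ^ (r * j) : Rˣ) : R) := by
  induction k generalizing v with
  | zero => simp [visits]
  | succ k ih =>
    rw [List.range_succ, List.map_append, List.prod_append, map_mul, Equiv.Perm.mul_apply, ih]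
    rw [Finset.range_add_one, Finset.filter_insert]
    by_cases h : k * q % p < r
    · have hc : visits p q r (k + 1) = visits p q r k + 1 := by
        simp [visits, Nat.count_succ, h]
      rw [if_pos h, Finset.sum_insert (by simp), hc]
      simp [h]
      ring
    · have hc : visits p q r (k + 1) = visits p q r k := by
        simp [visits, Nat.count_succ, h]
      rw [if_neg h, hc]
      simp [h]
      ring

theorem w_one_eq {p q r : ℕ} (h : r < p) :
    w p q r 1 = ((List.range p).map (fun j =>
      xx ^ (if j * q % p < r then 1 else 0) * yy)).prod := by
  unfold w
  congr 2
  funext j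
  rw [Nat.mod_eq_of_lt h, Nat.div_eq_of_lt h]
  split_ifs <;> simp

theorem visits_self {p q r : ℕ} (hpq : Nat.Coprime p q) (h : r < p) :
    visits p q r p = r := by
  have hinj : Set.InjOn (fun j => j * q % p) (Finset.range p : Set ℕ) := by
    intro i hi j hj hij
    simp only [Finset.coe_range, Set.mem_Iio] at hi hj
    have : i ≡ j [MOD p] := Nat.ModEq.cancel_right_of_coprime hpq hij
    exact Nat.ModEq.eq_of_lt_of_lt this hi hj
  have himg : (Finset.range p).image (fun j => j * q % p) = Finset.range p := by
    apply Finset.eq_of_subset_of_card_le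
    · intro k hk
      obtain ⟨j, -, rfl⟩ := Finset.mem_image.1 hk
      exact Finset.mem_range.2 (Nat.mod_lt _ (by omega))
    · rw [Finset.card_image_of_injOn hinj]
  have hfilter : ((Finset.range p).filter (fun j => j * q % p < r)).image
      (fun j => j * q % p) = Finset.range r := by
    rw [← Finset.filter_image (p := fun k => k < r), himg]
    ext k
    simp
    omega
  have hsub : (((Finset.range p).filter (fun j => j * q % p < r) : Finset ℕ) : Set ℕ) ⊆
      (Finset.range p : Set ℕ) := Finset.coe_subset.2 (Finset.filter_subset _ _)
  have hcard := Finset.card_image_of_injOn (hinj.mono hsub)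
  rw [hfilter, Finset.card_range] at hcard
  rw [visits, Nat.count_eq_card_filter_range, ← hcard]

/-- The exponent, shifted to be non-negative, with which the letter `xx` at position `j`
contributes to the Fox derivative of `w p q r 1`. -/
def height (p q r j : ℕ) : ℕ := p * visits p q r j + r * (p - j)

/-- The Fox derivative of `w p q r 1` with respect to `xx`, specialised along
`xx ↦ X ^ p`, `yy ↦ X ^ (-r)` and multiplied by `X ^ (r * p)`. -/
noncomputable def foxPoly (p q r : ℕ) : ℤ[X] :=
  ∑ j ∈ Finset.range p with j * q % p < r, X ^ height p q r j

/-- If `w p q r 1` is primitive, every unit root of `foxPoly p q r` is an `r`-th root of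
unity. -/
theorem pow_eq_one_of_isPrimitive {p q r : ℕ} (hpq : Nat.Coprime p q) (h : r < p)
    (hw : IsPrimitive (w p q r 1)) (u : Rˣ)
    (hu : (foxPoly p q r).eval₂ (Int.castRingHom R) u = 0) :
    u ^ r = 1 := by
  have hsum : ∑ j ∈ Finset.range p with j * q % p < r,
      ((u ^ (p * visits p q r j) * u⁻¹ ^ (r * j) : Rˣ) : R) = 0 := by
    rw [← (u ^ (r * p)).isUnit.mul_right_eq_zero, Finset.mul_sum, ← hu, foxPoly, eval₂_finsetSum]
    refine Finset.sum_congr rfl fun j hj => ?_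
    have hj : j < p := by simpa using (Finset.mem_filter.1 hj).1
    rw [eval₂_X_pow, ← Units.val_pow_eq_pow_val, ← Units.val_mul, height, pow_add]
    congr 1
    obtain ⟨d, rfl⟩ := Nat.exists_eq_add_of_lt hj
    have hd : j + d + 1 - j = d + 1 := by omega
    rw [hd, show r * (j + d + 1) = r * j + r * (d + 1) by ring, pow_add, inv_pow]
    rw [mul_comm (u ^ (r * j)), mul_assoc, mul_left_comm (u ^ (r * j)), mul_inv_cancel, mul_one,
      mul_comm]
  have hker : affineAction u p r (w p q r 1) = 1 := by
    ext v
    rw [w_one_eq h, affineAction_prefix, hsum, visits_self hpq h, mul_comm r p, ← mul_pow]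
    simp
  have hcomm := hw.commute_map _ hker xx yy
  have := congrArg (fun f : Equiv.Perm R => f 0) hcomm.eq
  simp only [affineAction_xx, affineAction_yy, Equiv.Perm.mul_apply, affinePerm_apply, mul_zero,
    add_zero, zero_add, mul_one] at this
  have h2 : (1 : Rˣ) = u⁻¹ ^ r := Units.ext this
  rw [inv_pow] at h2
  exact inv_eq_one.1 h2.symm

end AffineAction

section FoxPolynomial

open Polynomial

theorem foxPoly_dvd_of_isPrimitive {p q r : ℕ} (hpq : Nat.Coprime p q) (h : r < p)
    (hw : IsPrimitive (w p q r 1)) :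
    ∃ n : ℕ, foxPoly p q r ∣ X ^ n * (X ^ r - 1) := by
  let I : Ideal (LaurentPolynomial ℤ) := Ideal.span {toLaurent (foxPoly p q r)}
  let t : (LaurentPolynomial ℤ)ˣ :=
    ⟨LaurentPolynomial.T 1, LaurentPolynomial.T (-1),
      by rw [← LaurentPolynomial.T_add]; simp, by rw [← LaurentPolynomial.T_add]; simp⟩
  let u : (LaurentPolynomial ℤ ⧸ I)ˣ := Units.map (Ideal.Quotient.mk I).toMonoidHom t
  have hval : (u : LaurentPolynomial ℤ ⧸ I) = Ideal.Quotient.mk I (toLaurent X) := by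
    rw [toLaurent_X]
    rfl
  have heval (f : ℤ[X]) : f.eval₂ (Int.castRingHom _) (u : LaurentPolynomial ℤ ⧸ I) =
      Ideal.Quotient.mk I (toLaurent f) := by
    have : eval₂RingHom (Int.castRingHom _) (u : LaurentPolynomial ℤ ⧸ I) =
        (Ideal.Quotient.mk I).comp toLaurent := by
      apply Polynomial.ringHom_ext
      · intro n
        simp
      · simpa using hval
    exact congrArg (fun φ : ℤ[X] →+* _ => φ f) this
  have hroot := pow_eq_one_of_isPrimitive hpq h hw u (by
    rw [heval, Ideal.Quotient.eq_zero_iff_mem]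
    exact Ideal.mem_span_singleton_self _)
  have hmem : toLaurent (X ^ r - 1 : ℤ[X]) ∈ I := by
    rw [← Ideal.Quotient.eq_zero_iff_mem, ← heval]
    have := congrArg Units.val hroot
    simpa [sub_eq_zero] using this
  obtain ⟨g, hg⟩ := Ideal.mem_span_singleton.1 hmem
  obtain ⟨n, g', hg'⟩ := LaurentPolynomial.exists_T_pow g
  refine ⟨n, g', toLaurent_injective ?_⟩
  rw [map_mul, map_mul, hg, hg', toLaurent_X_pow]
  ring

theorem foxPoly_eval_one {p q r : ℕ} (hpq : Nat.Coprime p q) (h : r < p) :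
    (foxPoly p q r).eval 1 = r := by
  have := visits_self hpq h
  rw [visits, Nat.count_eq_card_filter_range] at this
  simp [foxPoly, eval_finsetSum, this]

theorem foxPoly_coeff_height_ne_zero {p q r j : ℕ} (hj : j < p) (hjr : j * q % p < r) :
    (foxPoly p q r).coeff (height p q r j) ≠ 0 := by
  rw [foxPoly, finsetSum_coeff]
  refine (Finset.sum_pos' (fun i _ => ?_) ⟨j, by simp [hj, hjr], ?_⟩).ne'
  · rw [coeff_X_pow]
    split_ifs <;> simp
  · simp

/-- The degree of `f` minus its trailing degree is less than `r` as soon as `f` divides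
`X ^ n * (X ^ r - 1)` and `f` does not vanish at `1`. -/
theorem natDegree_lt_natTrailingDegree_add {f : ℤ[X]} {n r : ℕ} (hr : 0 < r)
    (hf : f ∣ X ^ n * (X ^ r - 1)) (h1 : f.eval 1 ≠ 0) :
    f.natDegree < f.natTrailingDegree + r := by
  obtain ⟨g, hg⟩ := hf
  have hg1 : g.IsRoot 1 := by
    have := congrArg (eval 1) hg
    simpa [h1] using this.symm
  obtain ⟨k, rfl⟩ := dvd_iff_isRoot.2 hg1
  have hX : (X ^ r - C 1 : ℤ[X]) ≠ 0 := X_pow_sub_C_ne_zero hr 1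
  have hne : (X ^ n * (X ^ r - C 1) : ℤ[X]) ≠ 0 := mul_ne_zero (pow_ne_zero _ X_ne_zero) hX
  rw [← C_1] at hg
  have hf0 : f ≠ 0 := fun h => hne (by rw [hg, h, zero_mul])
  have hk0 : k ≠ 0 := fun h => hne (by rw [hg, h, mul_zero, mul_zero])
  have hl0 : (X - C 1 : ℤ[X]) ≠ 0 := X_sub_C_ne_zero 1
  have hdeg := congrArg natDegree hg
  have htr := congrArg natTrailingDegree hg
  rw [natDegree_mul (pow_ne_zero _ X_ne_zero) hX, natDegree_X_pow, natDegree_X_pow_sub_C,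
    natDegree_mul hf0 (mul_ne_zero hl0 hk0), natDegree_mul hl0 hk0, natDegree_X_sub_C] at hdeg
  have htrX : (X ^ r - C 1 : ℤ[X]).natTrailingDegree = 0 :=
    natTrailingDegree_eq_zero.2 (Or.inr (by simp [hr.ne]))
  have htrl : (X - C 1 : ℤ[X]).natTrailingDegree = 0 :=
    natTrailingDegree_eq_zero.2 (Or.inr (by simp))
  rw [natTrailingDegree_mul (pow_ne_zero _ X_ne_zero) hX, natTrailingDegree_X_pow, htrX,
    natTrailingDegree_mul hf0 (mul_ne_zero hl0 hk0), natTrailingDegree_mul hl0 hk0, htrl] at htr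
  have := natTrailingDegree_le_natDegree k
  omega

theorem height_lt_of_isPrimitive {p q r : ℕ} (hpq : Nat.Coprime p q) (hr : 0 < r) (h : r < p)
    (hw : IsPrimitive (w p q r 1)) {i j : ℕ} (hi : i ≤ p) (hir : i * q % p < r)
    (hj : j ≤ p) (hjr : j * q % p < r) : height p q r i < height p q r j + r := by
  obtain ⟨n, hn⟩ := foxPoly_dvd_of_isPrimitive hpq h hw
  have hspan := natDegree_lt_natTrailingDegree_add hr hn (by
    rw [foxPoly_eval_one hpq h]
    exact_mod_cast hr.ne')
  have hcoeff : ∀ k ≤ p, k * q % p < r → (foxPoly p q r).coeff (height p q r k) ≠ 0 := by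
    intro k hk hkr
    rcases hk.lt_or_eq with hk | rfl
    · exact foxPoly_coeff_height_ne_zero hk hkr
    · have : height k q r k = height k q r 0 := by
        rw [height, visits_self hpq h]
        simp [height, visits, mul_comm]
      rw [this]
      exact foxPoly_coeff_height_ne_zero (by omega) (by simpa using hr)
  have hle := le_natDegree_of_ne_zero (hcoeff i hi hir)
  have hge := natTrailingDegree_le_of_ne_zero (hcoeff j hj hjr)
  omega

end FoxPolynomial

section ReturnTimes

/-- `n` is the first return time to `[0, r)` of the point `j * q` under the rotation by `q`
modulo `p`. -/
def IsReturnTime (p q r j n : ℕ) : Prop :=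
  0 < n ∧ j * q % p < r ∧ (j + n) * q % p < r ∧
    ∀ k, 0 < k → k < n → ¬ (j + k) * q % p < r

theorem visits_add_of_isReturnTime {p q r j n : ℕ} (h : IsReturnTime p q r j n) :
    visits p q r (j + n) = visits p q r j + 1 := by
  obtain ⟨hn, hj, -, hbetween⟩ := h
  have key : ∀ k, k < n → visits p q r (j + (k + 1)) = visits p q r j + 1 := by
    intro k hk
    induction k with
    | zero => simp [visits, Nat.count_succ, hj]
    | succ k ih =>
      have := hbetween (k + 1) (by omega) hk
      rw [← ih (by omega), ← add_assoc j (k + 1) 1]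
      simp [visits, Nat.count_succ, this]
  have := key (n - 1) (by omega)
  rwa [Nat.sub_add_cancel hn] at this

/-- Primitivity forces any two return times to differ by at most one. -/
theorem returnTime_le_add_one {p q r : ℕ} (hpq : Nat.Coprime p q) (hr : 0 < r) (h : r < p)
    (hw : IsPrimitive (w p q r 1)) {i j m n : ℕ} (him : i + m ≤ p) (hjn : j + n ≤ p)
    (hi : IsReturnTime p q r i m) (hj : IsReturnTime p q r j n) : n ≤ m + 1 := by
  have hi' := height_lt_of_isPrimitive hpq hr h hw him hi.2.2.1 (by omega) hi.2.1
  have hj' := height_lt_of_isPrimitive hpq hr h hw (by omega) hj.2.1 hjn hj.2.2.1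
  rw [height, height, visits_add_of_isReturnTime hi] at hi'
  rw [height, height, visits_add_of_isReturnTime hj] at hj'
  have hi2 : r * (p - i) = r * (p - (i + m)) + r * m := by rw [← mul_add]; congr 1; omega
  have hj2 : r * (p - j) = r * (p - (j + n)) + r * n := by rw [← mul_add]; congr 1; omega
  rw [mul_add, mul_one] at hi' hj'
  by_contra hlt
  have : r * (m + 2) ≤ r * n := Nat.mul_le_mul_left r (by omega)
  rw [mul_add] at this
  omega

theorem exists_mul_mod_eq {p q k : ℕ} (hpq : Nat.Coprime p q) (hk : k < p) :
    ∃ n < p, n * q % p = k := by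
  obtain ⟨m, hmp, hm⟩ := Nat.exists_mul_mod_eq_of_coprime k hpq.symm (by omega)
  exact ⟨m, hmp, by rw [mul_comm, hm, Nat.mod_eq_of_lt hk]⟩

/-- For `1 < r < q < p / 2` the rotation by `q` modulo `p` has two return times to `[0, r)`
which differ by at least two. -/
theorem exists_isReturnTime_add_one_lt {p q r : ℕ} (hpq : Nat.Coprime p q)
    (hq2 : 2 * q < p) (hr1 : 1 < r) (hr2 : r < q) :
    ∃ i m j n, i + m ≤ p ∧ j + n ≤ p ∧ IsReturnTime p q r i m ∧ IsReturnTime p q r j n ∧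
      m + 1 < n := by
  have hp : 0 < p := by omega
  have hlt : ∀ n, n * q % p < p := fun n => Nat.mod_lt _ hp
  have hadd : ∀ m n, (m + n) * q % p = (m * q % p + n * q % p) % p := fun m n => by
    rw [add_mul, Nat.add_mod]
  have hadd' : ∀ m n, (m + n) * q % p = m * q % p + n * q % p ∨
      (m + n) * q % p + p = m * q % p + n * q % p := fun m n => by
    rw [hadd]
    rcases lt_or_ge (m * q % p + n * q % p) p with h | h
    · exact Or.inl (Nat.mod_eq_of_lt h)
    · right
      rw [Nat.mod_eq_sub_mod h, Nat.mod_eq_of_lt (by have := hlt m; have := hlt n; omega)]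
      omega
  have hpos : ∀ n, 0 < n → n < p → 0 < n * q % p := fun n hn hnp => by
    rw [Nat.pos_iff_ne_zero]
    intro h0
    have := Nat.le_of_dvd hn (hpq.dvd_of_dvd_mul_right (Nat.dvd_of_mod_eq_zero h0))
    omega
  have hqmod : 1 * q % p = q := by rw [one_mul, Nat.mod_eq_of_lt (by omega)]
  have hpmod : p * q % p = 0 := by simp
  -- the first return of `0`, forwards and backwards
  have hexa : ∃ n, 0 < n ∧ n < p ∧ n * q % p < r := by
    obtain ⟨n, hn, h1⟩ := exists_mul_mod_eq hpq (show 1 < p by omega)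
    refine ⟨n, Nat.pos_of_ne_zero ?_, hn, by omega⟩
    rintro rfl
    simp at h1
  have hexb : ∃ n, 0 < n ∧ n < p ∧ p < n * q % p + r := by
    obtain ⟨n, hn, h1⟩ := exists_mul_mod_eq hpq (show p - 1 < p by omega)
    refine ⟨n, Nat.pos_of_ne_zero ?_, hn, by omega⟩
    rintro rfl
    simp at h1
    omega
  obtain ⟨a, ⟨ha0, hap, har⟩, hamin⟩ :
      ∃ a, (0 < a ∧ a < p ∧ a * q % p < r) ∧ ∀ k, 0 < k → k < a → r ≤ k * q % p := by
    refine ⟨Nat.find hexa, Nat.find_spec hexa, fun k hk hka => ?_⟩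
    have := (Nat.find_spec hexa).2.1
    by_contra hc
    exact Nat.find_min hexa hka ⟨hk, by omega, by omega⟩
  obtain ⟨b, ⟨hb0, hbp, hbr⟩, hbmin⟩ :
      ∃ b, (0 < b ∧ b < p ∧ p < b * q % p + r) ∧ ∀ k, 0 < k → k < b → k * q % p + r ≤ p := by
    refine ⟨Nat.find hexb, Nat.find_spec hexb, fun k hk hka => ?_⟩
    have := (Nat.find_spec hexb).2.1
    by_contra hc
    exact Nat.find_min hexb hka ⟨hk, by omega, by omega⟩
  have hretA : IsReturnTime p q r 0 a := by
    refine ⟨ha0, by simp; omega, by simpa using har, fun k hk hka => ?_⟩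
    have := hamin k hk hka
    rw [zero_add]
    omega
  have hback : ∀ k, k ≤ b → (p - b + k) * q % p = if k = b then 0 else p - (b - k) * q % p := by
    intro k hk
    have hs := hadd' (p - b + k) (b - k)
    rw [show p - b + k + (b - k) = p by omega, hpmod] at hs
    have := hlt (p - b + k)
    split_ifs with hkb
    · subst hkb
      rw [show p - k + k = p by omega, hpmod]
    · have := hpos (b - k) (by omega) (by omega)
      omega
  have hretB : IsReturnTime p q r (p - b) b := by
    refine ⟨hb0, ?_, ?_, fun k hk hkb => ?_⟩
    · have := hback 0 (by omega)
      rw [if_neg (by omega), add_zero, Nat.sub_zero] at this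
      omega
    · rw [hback b le_rfl, if_pos rfl]
      omega
    · rw [hback k hkb.le, if_neg hkb.ne]
      have := hbmin (b - k) (by omega) (by omega)
      omega
  by_cases hab : a + 1 < b
  · exact ⟨0, a, p - b, b, by omega, by omega, hretA, hretB, hab⟩
  by_cases hba : b + 1 < a
  · exact ⟨p - b, b, 0, a, by omega, by omega, hretB, hretA, hba⟩
  -- a third return time, longer than both `a` and `b`
  have ha1 := hpos a ha0 hap
  obtain ⟨j, hjp, hj⟩ := exists_mul_mod_eq hpq (show r - a * q % p < p by omega)
  have hexn : ∃ n, 0 < n ∧ (j + n) * q % p < r := by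
    refine ⟨p - j, by omega, ?_⟩
    rw [show j + (p - j) = p by omega, hpmod]
    omega
  obtain ⟨n, ⟨hn0, hnr⟩, hnmin⟩ : ∃ n, (0 < n ∧ (j + n) * q % p < r) ∧
      ∀ k, 0 < k → k < n → ¬ (j + k) * q % p < r :=
    ⟨Nat.find hexn, Nat.find_spec hexn, fun k hk hkn hc => Nat.find_min hexn hkn ⟨hk, hc⟩⟩
  have hjn : j + n ≤ p := by
    by_contra hc
    refine hnmin (p - j) (by omega) (by omega) ?_
    rw [show j + (p - j) = p by omega, hpmod]
    omega
  have hretN : IsReturnTime p q r j n := ⟨hn0, by omega, hnr, hnmin⟩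
  have hne : a ≠ b := by
    rintro rfl
    omega
  have hsum : a = b + 1 ∨ b = a + 1 := by omega
  have hlarge : r < a * q % p + (p - b * q % p) := by
    have hb' := hlt b
    rcases hsum with rfl | rfl
    · have := hadd' b 1
      omega
    · have := hadd' a 1
      omega
  have hnj := hadd' j n
  have hnlt := hlt n
  have hblt := hlt b
  have hna : n ≠ a := by
    rintro rfl
    omega
  have hnb : n ≠ b := by
    rintro rfl
    omega
  have hgt : a ≤ n ∨ b ≤ n := by
    by_contra! hc
    have := hamin n hn0 hc.1
    have := hbmin n hn0 hc.2
    omega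
  rcases hsum with hs | hs
  · exact ⟨p - b, b, j, n, by omega, hjn, hretB, hretN, by omega⟩
  · exact ⟨0, a, j, n, by omega, hjn, hretA, hretN, by omega⟩

end ReturnTimes

/-- For coprime `p, q` with `1 < q < p/2` and `1 < r < q`, the word
`w_{p,q,r,1}` is not primitive. -/
theorem stmt4 (p q r : ℕ) (hpq : Nat.Coprime p q)
    (hq1 : 1 < q) (hq2 : 2 * q < p) (hr1 : 1 < r) (hr2 : r < q) :
    ¬ IsPrimitive (w p q r 1) := by
  intro hw
  obtain ⟨i, m, j, n, him, hjn, hi, hj, hmn⟩ :=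
    exists_isReturnTime_add_one_lt hpq hq2 hr1 hr2
  have := returnTime_le_add_one hpq (by omega) (by omega) hw him hjn hi hj
  omega
end

section
/- Let p and q be coprime integers with 1 ≤ q < p/2, let s = q̂⁻¹, and let r be an integer with 1 ≤ r ≤ ⌈p/s⌉. Then there is an automorphism of the free group F mapping w_{p,q,r,1} to x^r y^{p−rs}. -/
/-- The endomorphism of the free group fixing `yy` and sending `xx` to `xx * yy ^ n`. -/
def shear (n : ℤ) : FreeGroup (Fin 2) →* FreeGroup (Fin 2) :=
  FreeGroup.lift ![xx * yy ^ n, yy]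

lemma shear_xx (n : ℤ) : shear n xx = xx * yy ^ n := by
  simp [shear, xx]

lemma shear_yy (n : ℤ) : shear n yy = yy := by
  simp [shear, yy]

lemma shear_comp_shear_neg (n : ℤ) : (shear n).comp (shear (-n)) = MonoidHom.id _ := by
  ext i
  fin_cases i
  · change shear n (shear (-n) xx) = xx
    simp [shear_xx, shear_yy]
  · change shear n (shear (-n) yy) = yy
    simp [shear_yy]

/-- `shear` as an automorphism. -/
def shearEquiv (n : ℤ) : FreeGroup (Fin 2) ≃* FreeGroup (Fin 2) :=
  MonoidHom.toMulEquiv (shear n) (shear (-n))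
    (by simpa using shear_comp_shear_neg (-n)) (shear_comp_shear_neg n)

lemma shearEquiv_xx (n : ℤ) : shearEquiv n xx = xx * yy ^ n := shear_xx n

lemma shearEquiv_yy (n : ℤ) : shearEquiv n yy = yy := shear_yy n

section Blocks

variable {G : Type*} [Group G] {f : ℕ → G} {x y : G}

lemma prod_range_add (f : ℕ → G) (m n : ℕ) :
    ((List.range (m + n)).map f).prod =
      ((List.range m).map f).prod * ((List.range n).map fun j => f (m + j)).prod := by
  simp [List.range_add, Function.comp_def]

lemma prod_block {a n : ℕ} (hn : 0 < n) (h0 : f a = x * y)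
    (h : ∀ i, 0 < i → i < n → f (a + i) = y) :
    ((List.range n).map fun j => f (a + j)).prod = x * y ^ n := by
  induction n, hn using Nat.le_induction with
  | base => simp [h0]
  | succ n hn ih =>
    rw [List.range_succ, List.map_append, List.prod_append,
      ih fun i h1 h2 => h i h1 (by lia)]
    simp [h n hn (by lia), pow_succ, mul_assoc]

lemma prod_blocks {a s k : ℕ} (hs : 0 < s) (h0 : ∀ i < k, f (a + i * s) = x * y)
    (h : ∀ i < k, ∀ j, 0 < j → j < s → f (a + i * s + j) = y) :
    ((List.range (k * s)).map fun j => f (a + j)).prod = (x * y ^ s) ^ k := by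
  induction k with
  | zero => simp
  | succ k ih =>
    rw [Nat.succ_mul, prod_range_add,
      ih (fun i hi => h0 i (by lia)) (fun i hi => h i (by lia)), pow_succ]
    congr 1
    simpa only [add_assoc] using
      prod_block (f := f) hs (h0 k (by lia)) (h k (by lia))

end Blocks

lemma w_eq_prod_ite {p q r : ℕ} (hp : 0 < p) (hr : r ≤ p) :
    w p q r 1 =
      ((List.range p).map fun j => if j * q % p < r then xx * yy else yy).prod := by
  unfold w
  congr 2
  funext j
  rcases hr.lt_or_eq with h | rfl
  · rw [Nat.mod_eq_of_lt h, Nat.div_eq_of_lt h]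
    split_ifs <;> simp
  · simp [Nat.div_self hp, Nat.mod_lt _ hp]

lemma mul_mod_lt_iff_of_inverse {p q s r j : ℕ}
    (hs : (s * q : ℤ) ≡ 1 [ZMOD (p : ℤ)]) (hrs : (r - 1) * s < p) (hrp : r ≤ p) (hj : j < p) :
    j * q % p < r ↔ ∃ i < r, j = i * s := by
  obtain ⟨k, hk⟩ := hs.dvd
  constructor
  · intro h
    refine ⟨j * q % p, h, ?_⟩
    have hlt : j * q % p * s < p :=
      lt_of_le_of_lt (Nat.mul_le_mul_right s (by lia)) hrs
    have hd : ((j * q % p : ℕ) : ℤ) = j * q - p * (j * q / p : ℕ) := by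
      have := Nat.mod_add_div (j * q) p
      zify at this ⊢
      linarith
    have hmod : j ≡ j * q % p * s [MOD p] := by
      rw [← Int.natCast_modEq_iff, Int.modEq_iff_dvd, Nat.cast_mul, hd]
      exact ⟨-(j * k) - (j * q / p : ℕ) * s, by linear_combination -(j : ℤ) * hk⟩
    exact hmod.eq_of_lt_of_lt hj hlt
  · rintro ⟨i, hi, rfl⟩
    have hmod : i * s * q ≡ i [MOD p] := by
      rw [← Int.natCast_modEq_iff, Int.modEq_iff_dvd]
      exact ⟨i * k, by push_cast; linear_combination (i : ℤ) * hk⟩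
    rw [hmod, Nat.mod_eq_of_lt (by lia)]
    exact hi

lemma mul_mod_lt_iff_of_neg_inverse {p q s r j : ℕ} (hr : 1 ≤ r)
    (hs : (s * q : ℤ) ≡ -1 [ZMOD (p : ℤ)]) (hrs : (r - 1) * s < p) (hrp : r ≤ p) (hj : j < p) :
    j * q % p < r ↔ j = 0 ∨ ∃ i < r, j + i * s = p := by
  obtain ⟨k, hk⟩ := hs.dvd
  constructor
  · intro h
    have hlt : j * q % p * s < p :=
      lt_of_le_of_lt (Nat.mul_le_mul_right s (by lia)) hrs
    have hd : ((j * q % p : ℕ) : ℤ) = j * q - p * (j * q / p : ℕ) := by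
      have := Nat.mod_add_div (j * q) p
      zify at this ⊢
      linarith
    have hdvd : p ∣ j + j * q % p * s := by
      rw [← Int.natCast_dvd_natCast, Nat.cast_add, Nat.cast_mul, hd]
      exact ⟨-(j * k) - (j * q / p : ℕ) * s, by linear_combination -(j : ℤ) * hk⟩
    obtain ⟨c, hc⟩ := hdvd
    have hc2 : c < 2 := by
      by_contra! hc2
      have := Nat.mul_le_mul_left p hc2
      lia
    interval_cases c
    · left; lia
    · right; exact ⟨_, h, by lia⟩
  · rintro (rfl | ⟨i, hi, hji⟩)
    · rw [Nat.zero_mul, Nat.zero_mod]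
      exact hr
    have hmod : j * q ≡ i [MOD p] := by
      rw [← Int.natCast_modEq_iff, Int.modEq_iff_dvd]
      have hji' : (j : ℤ) + i * s = p := by exact_mod_cast hji
      exact ⟨-q - i * k, by push_cast; linear_combination -(i : ℤ) * hk - (q : ℤ) * hji'⟩
    rw [hmod, Nat.mod_eq_of_lt (by lia)]
    exact hi

lemma not_mul_add_eq_mul {s a b i : ℕ} (h0 : 0 < i) (h1 : i < s) : a * s + i ≠ b * s := by
  intro h
  have := congrArg (· % s) h
  simp [Nat.mod_eq_of_lt h1] at this
  lia

lemma w_eq_of_inverse {p q s k : ℕ} (hs0 : 0 < s)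
    (hs : (s * q : ℤ) ≡ 1 [ZMOD (p : ℤ)]) (hk : k * s < p) (hkp : k + 1 ≤ p) :
    w p q (k + 1) 1 = (xx * yy ^ s) ^ k * (xx * yy ^ (p - k * s)) := by
  have key : ∀ j < p, j * q % p < k + 1 ↔ ∃ i < k + 1, j = i * s :=
    fun j hj => mul_mod_lt_iff_of_inverse hs (by simpa using hk) hkp hj
  have hmul : ∀ i ≤ k, i * s ≤ k * s := fun i hi => Nat.mul_le_mul_right s hi
  have hsucc : ∀ i < k, i * s + s ≤ k * s := fun i hi => by
    simpa [Nat.succ_mul] using hmul (i + 1) hi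
  rw [w_eq_prod_ite (by lia) hkp]
  generalize hf : (fun j => if j * q % p < k + 1 then xx * yy else yy) = f
  have hpos : ∀ i < k + 1, f (i * s) = xx * yy := fun i hi => by
    have := hmul i (by lia)
    rw [← hf]
    exact if_pos ((key _ (by lia)).2 ⟨i, hi, rfl⟩)
  have hneg : ∀ j < p, (∀ i < k + 1, j ≠ i * s) → f j = yy := fun j hj h => by
    rw [← hf]
    exact if_neg fun h' => by
      obtain ⟨i, hi, e⟩ := (key _ hj).1 h'
      exact h i hi e
  have hsplit : p = k * s + (p - k * s) := by lia
  conv_lhs => rw [hsplit]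
  rw [prod_range_add]
  congr 1
  · have := prod_blocks (f := f) (a := 0) (x := xx) (y := yy) (k := k) hs0
      (fun i hi => by simpa using hpos i (by lia))
      (fun i hi j hj0 hjs => by
        have := hsucc i hi
        exact hneg _ (by lia) fun i' _ => by
          simpa using not_mul_add_eq_mul hj0 hjs)
    simpa using this
  · refine prod_block (by lia) (hpos k (by lia)) fun i h0 h1 => hneg _ (by lia) fun i' hi' => ?_
    have := hmul i' (by lia)
    lia

lemma w_eq_of_neg_inverse {p q s k : ℕ} (hs0 : 0 < s)
    (hs : (s * q : ℤ) ≡ -1 [ZMOD (p : ℤ)]) (hk : k * s < p) (hkp : k + 1 ≤ p) :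
    w p q (k + 1) 1 = xx * yy ^ (p - k * s) * (xx * yy ^ s) ^ k := by
  have key : ∀ j < p, j * q % p < k + 1 ↔ j = 0 ∨ ∃ i < k + 1, j + i * s = p :=
    fun j hj => mul_mod_lt_iff_of_neg_inverse (by lia) hs (by simpa using hk) hkp hj
  have hmul : ∀ i ≤ k, i * s ≤ k * s := fun i hi => Nat.mul_le_mul_right s hi
  have hsucc : ∀ i < k, i * s + s ≤ k * s := fun i hi => by
    simpa [Nat.succ_mul] using hmul (i + 1) hi
  rw [w_eq_prod_ite (by lia) hkp]
  generalize hf : (fun j => if j * q % p < k + 1 then xx * yy else yy) = f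
  have hpos : ∀ j < p, (j = 0 ∨ ∃ i < k + 1, j + i * s = p) → f j = xx * yy := fun j hj h => by
    rw [← hf]
    exact if_pos ((key _ hj).2 h)
  have hneg : ∀ j < p, 0 < j → (∀ i < k + 1, j + i * s ≠ p) → f j = yy := fun j hj hj0 h => by
    rw [← hf]
    exact if_neg fun h' => by
      obtain rfl | ⟨i, hi, e⟩ := (key _ hj).1 h'
      · exact hj0.false
      · exact h i hi e
  have hsplit : p = (p - k * s) + k * s := by lia
  conv_lhs => rw [hsplit]
  rw [prod_range_add]
  congr 1
  · have := prod_block (f := f) (a := 0) (n := p - k * s) (x := xx) (y := yy) (by lia)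
      (hpos 0 (by lia) (.inl rfl))
      (fun i h0 h1 => hneg _ (by lia) (by lia) fun i' hi' => by
        have := hmul i' (by lia)
        lia)
    simpa using this
  · refine prod_blocks hs0 (fun i hi => ?_) (fun i hi j hj0 hjs => ?_)
    · have := hsucc i hi
      refine hpos _ (by lia) (.inr ⟨k - i, by lia, ?_⟩)
      rw [Nat.sub_mul]
      lia
    · have := hsucc i hi
      refine hneg _ (by lia) (by lia) fun i' _ h => ?_
      refine not_mul_add_eq_mul (a := i + i') (b := k) hj0 hjs ?_
      rw [add_mul]
      lia

/-- For coprime `p, q` with `1 ≤ q < p/2`, `s = q̂⁻¹` the smallest positive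
integer with `s q ≡ ±1 (mod p)`, and `1 ≤ r ≤ ⌈p/s⌉`, some automorphism of
the free group maps `w_{p,q,r,1}` to `x^r y^{p - r s}`. -/
theorem stmt11 (p q s r : ℕ) (hpq : Nat.Coprime p q)
    (hq1 : 1 ≤ q) (hq2 : 2 * q < p)
    (hs1 : 0 < s)
    (hs2 : (s * q : ℤ) ≡ 1 [ZMOD (p : ℤ)] ∨ (s * q : ℤ) ≡ -1 [ZMOD (p : ℤ)])
    (hs3 : ∀ t : ℕ, 0 < t →
      ((t * q : ℤ) ≡ 1 [ZMOD (p : ℤ)] ∨ (t * q : ℤ) ≡ -1 [ZMOD (p : ℤ)]) → s ≤ t)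
    (hr1 : 1 ≤ r) (hr2 : (r : ℤ) ≤ ⌈(p : ℚ) / (s : ℚ)⌉) :
    ∃ φ : FreeGroup (Fin 2) ≃* FreeGroup (Fin 2),
      φ (w p q r 1) = xx ^ (r : ℤ) * yy ^ ((p : ℤ) - r * s) := by
  obtain ⟨k, rfl⟩ : ∃ k, r = k + 1 := ⟨r - 1, by lia⟩
  have hk : k * s < p := by
    have h1 : (k : ℤ) < ⌈(p : ℚ) / (s : ℚ)⌉ := by push_cast at hr2; lia
    rw [Int.lt_ceil, lt_div_iff₀ (by exact_mod_cast hs1)] at h1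
    exact_mod_cast h1
  have hkp : k + 1 ≤ p := lt_of_le_of_lt (Nat.le_mul_of_pos_right k hs1) hk
  have hexp : yy ^ (-(s : ℤ)) * yy ^ (p - k * s) = yy ^ ((p : ℤ) - (k + 1 : ℕ) * s) := by
    rw [← zpow_natCast, ← zpow_add, Nat.cast_sub hk.le]
    congr 1
    push_cast
    ring
  rcases hs2 with hs | hs
  · refine ⟨shearEquiv (-s), ?_⟩
    rw [w_eq_of_inverse hs1 hs hk hkp, ← hexp, zpow_natCast, pow_succ]
    simp [shearEquiv_xx, shearEquiv_yy, mul_assoc]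
  · refine ⟨(shearEquiv (-s)).trans (MulAut.conj (xx ^ k)), ?_⟩
    rw [w_eq_of_neg_inverse hs1 hs hk hkp, ← hexp, zpow_natCast, pow_succ,
      MulEquiv.trans_apply, MulAut.conj_apply]
    simp [shearEquiv_xx, shearEquiv_yy, mul_assoc]
end
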